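/- arXiv:math/0111114 — 2 statements merged into one kernel-verified Lean document; each statement's English description precedes it below -/
import Mathlib

section
/- For any invertible matrix E ∈ GL(n,k), the algebra B(E) admits a Hopf algebra structure over k whose comultiplication Δ satisfies Δ(a_{ij}) = Σ_{k=1}^n a_{ik} ⊗ a_{kj} for all 1 ≤ i,j ≤ n, whose counit ε satisfies ε(a_{ij}) = δ_{ij}, and whose antipode S satisfies S(a_{ij}) = (E⁻¹·ᵀa·E)_{ij}, where a = (a_{ij}) is the matrix of generators. -/
open scoped TensorProduct
open Matrix

noncomputable section

variable (k : Type) [Field k]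

/-- The matrix of free generators of the free algebra on `Fin m × Fin n`. -/
def gens (m n : ℕ) : Matrix (Fin m) (Fin n) (FreeAlgebra k (Fin m × Fin n)) :=
  Matrix.of fun i j => FreeAlgebra.ι k (i, j)

/-- A scalar matrix viewed as a matrix over a `k`-algebra. -/
def liftMat {A : Type} [Semiring A] [Algebra k A] {p q : ℕ}
    (M : Matrix (Fin p) (Fin q) k) : Matrix (Fin p) (Fin q) A :=
  M.map (algebraMap k A)

/-- The defining relations of the algebra `B(E,F)`:
`F⁻¹ * ᵀz * E * z = 1` and `z * F⁻¹ * ᵀz * E = 1`. -/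
inductive BRel {m n : ℕ} (E : Matrix (Fin m) (Fin m) k) (F : Matrix (Fin n) (Fin n) k) :
    FreeAlgebra k (Fin m × Fin n) → FreeAlgebra k (Fin m × Fin n) → Prop
  | left (i j : Fin n) : BRel E F
      ((liftMat k (A := FreeAlgebra k (Fin m × Fin n)) F⁻¹ * (gens k m n)ᵀ * liftMat k (A := FreeAlgebra k (Fin m × Fin n)) E * gens k m n :
          Matrix (Fin n) (Fin n) (FreeAlgebra k (Fin m × Fin n))) i j)
      ((1 : Matrix (Fin n) (Fin n) (FreeAlgebra k (Fin m × Fin n))) i j)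
  | right (i j : Fin m) : BRel E F
      ((gens k m n * liftMat k (A := FreeAlgebra k (Fin m × Fin n)) F⁻¹ * (gens k m n)ᵀ * liftMat k E :
          Matrix (Fin m) (Fin m) (FreeAlgebra k (Fin m × Fin n))) i j)
      ((1 : Matrix (Fin m) (Fin m) (FreeAlgebra k (Fin m × Fin n))) i j)

/-- The algebra `B(E,F)`.  The Hopf algebra `B(E)` is `BB k E E`. -/
abbrev BB {m n : ℕ} (E : Matrix (Fin m) (Fin m) k) (F : Matrix (Fin n) (Fin n) k) :=
  RingQuot (BRel k E F)

/-- The matrix of generators of `B(E,F)`. -/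
def ZMat {m n : ℕ} (E : Matrix (Fin m) (Fin m) k) (F : Matrix (Fin n) (Fin n) k) :
    Matrix (Fin m) (Fin n) (BB k E F) :=
  Matrix.of fun i j => RingQuot.mkAlgHom k (BRel k E F) (gens k m n i j)
/-!
The relations of `B(E, F)` say that the matrix `z` of generators is invertible with inverse its
adjoint `F⁻¹ zᵀ E` for the bilinear forms `E` and `F`. Over a noncommutative algebra transposition
reverses products only when the entries of the factors commute, or after passing to the opposite
algebra. The first case shows that a product of commuting such matrices is again one, whence
`Δ : B(E, F) → B(E, G) ⊗ B(G, F)`; the second one shows that `F⁻¹ zᵀ E` is such a matrix over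
the opposite algebra, whence `S : B(E, F) → B(F, E)ᵒᵖ`. The Hopf algebra axioms for `B(E)` are
the diagonal case of identities between these maps which are checked on generators.
-/

section TransposeNoncommutative

variable {A l m n : Type*} [Semiring A]

theorem transpose_mul_of_commute [Fintype m] {M : Matrix l m A} {N : Matrix m n A}
    (h : ∀ i j i' j', Commute (M i j) (N i' j')) : (M * N)ᵀ = Nᵀ * Mᵀ := by
  ext i j
  exact Finset.sum_congr rfl fun _ _ => h _ _ _ _

/-- The transpose of a matrix, read over the opposite algebra. Unlike the plain transpose it
reverses products over any noncommutative algebra. -/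
def opTranspose {B : Type*} (M : Matrix l n B) : Matrix n l Bᵐᵒᵖ :=
  Mᵀ.map MulOpposite.op

theorem opTranspose_mul [Fintype m] (M : Matrix l m A) (N : Matrix m n A) :
    opTranspose (M * N) = opTranspose N * opTranspose M := by
  ext i j
  simp [opTranspose, mul_apply]

theorem opTranspose_one [DecidableEq m] : opTranspose (1 : Matrix m m A) = 1 := by
  rw [opTranspose, transpose_one, Matrix.map_one _ MulOpposite.op_zero MulOpposite.op_one]

end TransposeNoncommutative

section AntipodeOnGenerators

variable {R A B H : Type*} [CommSemiring R] [Semiring A] [Semiring B] [Semiring H]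
  [Algebra R A] [Algebra R B] [Algebra R H]

theorem mul'_rTensor_mul_tmul (S : A →ₗ[R] B) (hS : ∀ x y, S (x * y) = S y * S x)
    (t : A ⊗[R] B) (a : A) (b : B) :
    LinearMap.mul' R B (S.rTensor B (t * a ⊗ₜ b)) =
      S a * LinearMap.mul' R B (S.rTensor B t) * b := by
  induction t with
  | zero => simp
  | add t u ht hu => simp only [mul_add, add_mul, map_add, ht, hu]
  | tmul x y => simp [hS, mul_assoc]

theorem mul'_lTensor_tmul_mul (S : B →ₗ[R] A) (hS : ∀ x y, S (x * y) = S y * S x)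
    (a : A) (b : B) (t : A ⊗[R] B) :
    LinearMap.mul' R A (S.lTensor A (a ⊗ₜ b * t)) =
      a * LinearMap.mul' R A (S.lTensor A t) * S b := by
  induction t with
  | zero => simp
  | add t u ht hu => simp only [mul_add, add_mul, map_add, ht, hu]
  | tmul x y => simp [hS, mul_assoc]

theorem mul'_rTensor_mul_of_eq_algebraMap (S : A →ₗ[R] B) (hS : ∀ x y, S (x * y) = S y * S x)
    {t : A ⊗[R] B} {c : R} (ht : LinearMap.mul' R B (S.rTensor B t) = algebraMap R B c)
    (u : A ⊗[R] B) :
    LinearMap.mul' R B (S.rTensor B (t * u)) =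
      algebraMap R B c * LinearMap.mul' R B (S.rTensor B u) := by
  induction u with
  | zero => simp
  | add u v hu hv => simp only [mul_add, map_add, hu, hv]
  | tmul a b =>
    rw [mul'_rTensor_mul_tmul S hS, ht, ← Algebra.commutes, mul_assoc, LinearMap.rTensor_tmul,
      LinearMap.mul'_apply]

theorem mul'_lTensor_mul_of_eq_algebraMap (S : B →ₗ[R] A) (hS : ∀ x y, S (x * y) = S y * S x)
    {u : A ⊗[R] B} {c : R} (hu : LinearMap.mul' R A (S.lTensor A u) = algebraMap R A c)
    (t : A ⊗[R] B) :
    LinearMap.mul' R A (S.lTensor A (t * u)) =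
      LinearMap.mul' R A (S.lTensor A t) * algebraMap R A c := by
  induction t with
  | zero => simp
  | add t v ht hv => simp only [add_mul, map_add, ht, hv]
  | tmul a b =>
    rw [mul'_lTensor_tmul_mul S hS, hu, mul_assoc, Algebra.commutes, ← mul_assoc,
      LinearMap.lTensor_tmul, LinearMap.mul'_apply]

variable (Δ : H →ₐ[R] A ⊗[R] B) (ε : H →ₐ[R] R) {s : Set H}

theorem mul'_rTensor_eq_algebraMap_of_adjoin_eq_top (hs : Algebra.adjoin R s = ⊤)
    (S : A →ₗ[R] B) (hS_one : S 1 = 1) (hS_mul : ∀ x y, S (x * y) = S y * S x)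
    (h : ∀ x ∈ s, LinearMap.mul' R B (S.rTensor B (Δ x)) = algebraMap R B (ε x)) (x : H) :
    LinearMap.mul' R B (S.rTensor B (Δ x)) = algebraMap R B (ε x) := by
  have hx : x ∈ Algebra.adjoin R s := hs ▸ Algebra.mem_top
  induction hx using Algebra.adjoin_induction with
  | mem x hx => exact h x hx
  | algebraMap r => simp [Algebra.algebraMap_eq_smul_one, Algebra.TensorProduct.one_def, hS_one]
  | add x y _ _ hx hy => simp only [map_add, hx, hy]
  | mul x y _ _ hx hy =>
    rw [map_mul, mul'_rTensor_mul_of_eq_algebraMap S hS_mul hx, hy, map_mul, map_mul]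

theorem mul'_lTensor_eq_algebraMap_of_adjoin_eq_top (hs : Algebra.adjoin R s = ⊤)
    (S : B →ₗ[R] A) (hS_one : S 1 = 1) (hS_mul : ∀ x y, S (x * y) = S y * S x)
    (h : ∀ x ∈ s, LinearMap.mul' R A (S.lTensor A (Δ x)) = algebraMap R A (ε x)) (x : H) :
    LinearMap.mul' R A (S.lTensor A (Δ x)) = algebraMap R A (ε x) := by
  have hx : x ∈ Algebra.adjoin R s := hs ▸ Algebra.mem_top
  induction hx using Algebra.adjoin_induction with
  | mem x hx => exact h x hx
  | algebraMap r => simp [Algebra.algebraMap_eq_smul_one, Algebra.TensorProduct.one_def, hS_one]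
  | add x y _ _ hx hy => simp only [map_add, hx, hy]
  | mul x y _ _ hx hy =>
    rw [map_mul, mul'_lTensor_mul_of_eq_algebraMap S hS_mul hy, hx, map_mul, map_mul]

end AntipodeOnGenerators

section LiftMat

variable {k} {A B : Type} [Semiring A] [Algebra k A] [Semiring B] [Algebra k B] {p q r : ℕ}

theorem liftMat_mul (M : Matrix (Fin p) (Fin q) k) (N : Matrix (Fin q) (Fin r) k) :
    liftMat k (A := A) (M * N) = liftMat k (A := A) M * liftMat k (A := A) N :=
  Matrix.map_mul

theorem liftMat_one : liftMat k (A := A) (1 : Matrix (Fin p) (Fin p) k) = 1 :=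
  Matrix.map_one _ (map_zero _) (map_one _)

theorem one_map_algHom (f : A →ₐ[k] B) : (1 : Matrix (Fin p) (Fin p) A).map f = 1 :=
  Matrix.map_one f (map_zero f) (map_one f)

theorem map_liftMat (f : A →ₐ[k] B) (M : Matrix (Fin p) (Fin q) k) :
    (liftMat k (A := A) M).map f = liftMat k M := by
  ext i j
  exact f.commutes _

theorem opTranspose_liftMat (M : Matrix (Fin p) (Fin q) k) :
    opTranspose (liftMat k (A := A) M) = liftMat k Mᵀ :=
  rfl

theorem transpose_liftMat_mul (M : Matrix (Fin p) (Fin q) k) (N : Matrix (Fin q) (Fin r) A) :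
    (liftMat k (A := A) M * N)ᵀ = Nᵀ * liftMat k (A := A) Mᵀ :=
  transpose_mul_of_commute fun _ _ _ _ => Algebra.commutes _ _

theorem transpose_mul_liftMat (N : Matrix (Fin p) (Fin q) A) (M : Matrix (Fin q) (Fin r) k) :
    (N * liftMat k (A := A) M)ᵀ = liftMat k (A := A) Mᵀ * Nᵀ :=
  transpose_mul_of_commute fun _ _ _ _ => (Algebra.commutes _ _).symm

variable {M : Matrix (Fin p) (Fin p) k}

theorem liftMat_mul_liftMat_inv (hM : IsUnit M.det) :
    liftMat k (A := A) M * liftMat k (A := A) M⁻¹ = 1 := by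
  rw [← liftMat_mul, mul_nonsing_inv M hM, liftMat_one]

theorem liftMat_inv_mul_liftMat (hM : IsUnit M.det) :
    liftMat k (A := A) M⁻¹ * liftMat k (A := A) M = 1 := by
  rw [← liftMat_mul, nonsing_inv_mul M hM, liftMat_one]

theorem liftMat_transpose_mul_liftMat_inv_transpose (hM : IsUnit M.det) :
    liftMat k (A := A) Mᵀ * liftMat k (A := A) M⁻¹ᵀ = 1 := by
  rw [← liftMat_mul, ← transpose_mul, nonsing_inv_mul M hM, transpose_one, liftMat_one]

theorem liftMat_inv_transpose_mul_liftMat_transpose (hM : IsUnit M.det) :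
    liftMat k (A := A) M⁻¹ᵀ * liftMat k (A := A) Mᵀ = 1 := by
  rw [← liftMat_mul, ← transpose_mul, mul_nonsing_inv M hM, transpose_one, liftMat_one]

end LiftMat

section FormAdjoint

variable {k} {A B : Type} [Semiring A] [Algebra k A] [Semiring B] [Algebra k B] {m n p : ℕ}
  (E : Matrix (Fin m) (Fin m) k) (F : Matrix (Fin n) (Fin n) k)

/-- The adjoint `F⁻¹ zᵀ E` of `z` with respect to the bilinear forms with Gram matrices `E` and
`F`; for invertible `F` it is the matrix `w` with `F w = zᵀ E`. -/
def formAdjoint (z : Matrix (Fin m) (Fin n) A) : Matrix (Fin n) (Fin m) A :=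
  liftMat k (A := A) F⁻¹ * zᵀ * liftMat k (A := A) E

theorem formAdjoint_one (hE : IsUnit E.det) :
    formAdjoint E E (1 : Matrix (Fin m) (Fin m) A) = 1 := by
  rw [formAdjoint, transpose_one, Matrix.mul_one, liftMat_inv_mul_liftMat hE]

theorem formAdjoint_map (f : A →ₐ[k] B) (z : Matrix (Fin m) (Fin n) A) :
    formAdjoint E F (z.map f) = (formAdjoint E F z).map f := by
  simp only [formAdjoint, Matrix.map_mul, map_liftMat, transpose_map]

theorem formAdjoint_mul {G : Matrix (Fin p) (Fin p) k} (hG : IsUnit G.det)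
    {x : Matrix (Fin m) (Fin p) A} {y : Matrix (Fin p) (Fin n) A}
    (hxy : ∀ i j i' j', Commute (x i j) (y i' j')) :
    formAdjoint E F (x * y) = formAdjoint G F y * formAdjoint E G x := by
  rw [formAdjoint, transpose_mul_of_commute hxy, ← Matrix.mul_one yᵀ,
    ← liftMat_mul_liftMat_inv hG]
  simp only [formAdjoint, Matrix.mul_assoc]

theorem map_op_formAdjoint (z : Matrix (Fin m) (Fin n) A) :
    (formAdjoint E F z).map MulOpposite.op =
      opTranspose (liftMat k (A := A) Eᵀ * z * liftMat k (A := A) F⁻¹ᵀ) := by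
  rw [opTranspose, transpose_mul_liftMat, transpose_liftMat_mul, formAdjoint]
  simp only [transpose_transpose, Matrix.mul_assoc]

theorem formAdjoint_map_op (w : Matrix (Fin n) (Fin m) A) :
    formAdjoint F E (w.map MulOpposite.op) =
      opTranspose (liftMat k (A := A) Fᵀ * w * liftMat k (A := A) E⁻¹ᵀ) := by
  rw [opTranspose_mul, opTranspose_mul, opTranspose_liftMat, opTranspose_liftMat,
    transpose_transpose, transpose_transpose, ← Matrix.mul_assoc]
  rfl

/-- `z` is an `A`-valued point of `B(E, F)`: it satisfies the defining relations, which say that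
its adjoint is a two-sided inverse. -/
structure IsPoint (z : Matrix (Fin m) (Fin n) A) : Prop where
  formAdjoint_mul_self : formAdjoint E F z * z = 1
  self_mul_formAdjoint : z * formAdjoint E F z = 1

end FormAdjoint

namespace IsPoint

variable {k} {A B : Type} [Semiring A] [Algebra k A] [Semiring B] [Algebra k B] {m n p : ℕ}
  {E : Matrix (Fin m) (Fin m) k} {F : Matrix (Fin n) (Fin n) k} {G : Matrix (Fin p) (Fin p) k}

theorem one (hE : IsUnit E.det) : IsPoint E E (1 : Matrix (Fin m) (Fin m) A) where
  formAdjoint_mul_self := by rw [formAdjoint_one E hE, Matrix.mul_one]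
  self_mul_formAdjoint := by rw [formAdjoint_one E hE, Matrix.mul_one]

theorem map {z : Matrix (Fin m) (Fin n) A} (hz : IsPoint E F z) (f : A →ₐ[k] B) :
    IsPoint E F (z.map f) where
  formAdjoint_mul_self := by
    rw [formAdjoint_map, ← Matrix.map_mul, hz.formAdjoint_mul_self, one_map_algHom]
  self_mul_formAdjoint := by
    rw [formAdjoint_map, ← Matrix.map_mul, hz.self_mul_formAdjoint, one_map_algHom]

theorem mul (hG : IsUnit G.det) {x : Matrix (Fin m) (Fin p) A} {y : Matrix (Fin p) (Fin n) A}
    (hx : IsPoint E G x) (hy : IsPoint G F y) (hxy : ∀ i j i' j', Commute (x i j) (y i' j')) :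
    IsPoint E F (x * y) where
  formAdjoint_mul_self := by
    rw [formAdjoint_mul E F hG hxy, Matrix.mul_assoc, ← Matrix.mul_assoc _ x,
      hx.formAdjoint_mul_self, Matrix.one_mul, hy.formAdjoint_mul_self]
  self_mul_formAdjoint := by
    rw [formAdjoint_mul E F hG hxy, Matrix.mul_assoc, ← Matrix.mul_assoc y,
      hy.self_mul_formAdjoint, Matrix.one_mul, hx.self_mul_formAdjoint]

theorem formAdjoint_op (hE : IsUnit E.det) (hF : IsUnit F.det) {z : Matrix (Fin m) (Fin n) A}
    (hz : IsPoint E F z) : IsPoint F E ((formAdjoint E F z).map MulOpposite.op) where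
  formAdjoint_mul_self := by
    rw [formAdjoint_map_op, map_op_formAdjoint, ← opTranspose_mul]
    calc _ = opTranspose (liftMat k (A := A) Eᵀ *
            (z * (liftMat k (A := A) F⁻¹ᵀ * liftMat k (A := A) Fᵀ) * formAdjoint E F z) *
            liftMat k (A := A) E⁻¹ᵀ) := by simp only [Matrix.mul_assoc]
      _ = 1 := by
        rw [liftMat_inv_transpose_mul_liftMat_transpose hF, Matrix.mul_one,
          hz.self_mul_formAdjoint, Matrix.mul_one, liftMat_transpose_mul_liftMat_inv_transpose hE,
          opTranspose_one]
  self_mul_formAdjoint := by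
    rw [formAdjoint_map_op, map_op_formAdjoint, ← opTranspose_mul]
    calc _ = opTranspose (liftMat k (A := A) Fᵀ *
            (formAdjoint E F z * (liftMat k (A := A) E⁻¹ᵀ * liftMat k (A := A) Eᵀ) * z) *
            liftMat k (A := A) F⁻¹ᵀ) := by simp only [Matrix.mul_assoc]
      _ = 1 := by
        rw [liftMat_inv_transpose_mul_liftMat_transpose hE, Matrix.mul_one,
          hz.formAdjoint_mul_self, Matrix.mul_one, liftMat_transpose_mul_liftMat_inv_transpose hF,
          opTranspose_one]

end IsPoint

namespace BB

section UniversalProperty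

variable {k} {A : Type} [Semiring A] [Algebra k A] {m n : ℕ}
  (E : Matrix (Fin m) (Fin m) k) (F : Matrix (Fin n) (Fin n) k)

theorem isPoint_ZMat : IsPoint E F (ZMat k E F) := by
  have hZ : ZMat k E F = (gens k m n).map (RingQuot.mkAlgHom k (BRel k E F)) := rfl
  constructor
  · rw [hZ, formAdjoint_map, ← Matrix.map_mul, ← one_map_algHom (RingQuot.mkAlgHom k _)]
    ext i j
    exact RingQuot.mkAlgHom_rel k (BRel.left i j)
  · rw [hZ, formAdjoint_map, ← Matrix.map_mul, ← one_map_algHom (RingQuot.mkAlgHom k _),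
      formAdjoint, ← Matrix.mul_assoc, ← Matrix.mul_assoc]
    ext i j
    exact RingQuot.mkAlgHom_rel k (BRel.right i j)

variable {E F}

theorem freeAlgebraLift_eq_of_BRel {z : Matrix (Fin m) (Fin n) A} (hz : IsPoint E F z)
    ⦃x y : FreeAlgebra k (Fin m × Fin n)⦄ (hxy : BRel k E F x y) :
    FreeAlgebra.lift k (fun p => z p.1 p.2) x = FreeAlgebra.lift k (fun p => z p.1 p.2) y := by
  set f := FreeAlgebra.lift k fun p : Fin m × Fin n => z p.1 p.2
  have map_gens : (gens k m n).map f = z := by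
    ext i j
    exact FreeAlgebra.lift_ι_apply _ _
  have map_left : (formAdjoint E F (gens k m n) * gens k m n).map f =
      (1 : Matrix _ _ _).map f := by
    rw [Matrix.map_mul, ← formAdjoint_map, map_gens, hz.formAdjoint_mul_self, one_map_algHom]
  have map_right : (gens k m n * formAdjoint E F (gens k m n)).map f =
      (1 : Matrix _ _ _).map f := by
    rw [Matrix.map_mul, ← formAdjoint_map, map_gens, hz.self_mul_formAdjoint, one_map_algHom]
  rw [formAdjoint, ← Matrix.mul_assoc, ← Matrix.mul_assoc] at map_right
  cases hxy with
  | left i j => exact congr_fun₂ map_left i j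
  | right i j => exact congr_fun₂ map_right i j

/-- The universal property of `B(E, F)`: the algebra map sending the generators to the entries of
a given point. -/
def lift {z : Matrix (Fin m) (Fin n) A} (hz : IsPoint E F z) : BB k E F →ₐ[k] A :=
  RingQuot.liftAlgHom k
    ⟨FreeAlgebra.lift k fun p => z p.1 p.2, freeAlgebraLift_eq_of_BRel hz⟩

theorem lift_ZMat {z : Matrix (Fin m) (Fin n) A} (hz : IsPoint E F z) (i : Fin m) (j : Fin n) :
    lift hz (ZMat k E F i j) = z i j := by
  simp [lift, ZMat, gens]

variable (E F) in
theorem adjoin_range_ZMat :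
    Algebra.adjoin k (Set.range fun p : Fin m × Fin n => ZMat k E F p.1 p.2) = ⊤ := by
  have range_ZMat : Set.range (fun p : Fin m × Fin n => ZMat k E F p.1 p.2) =
      RingQuot.mkAlgHom k (BRel k E F) '' Set.range (FreeAlgebra.ι k) :=
    Set.range_comp _ _
  rw [range_ZMat, ← AlgHom.map_adjoin, FreeAlgebra.adjoin_range_ι, Algebra.map_top,
    AlgHom.range_eq_top]
  exact RingQuot.mkAlgHom_surjective k _

theorem algHom_ext {f g : BB k E F →ₐ[k] A}
    (h : ∀ i j, f (ZMat k E F i j) = g (ZMat k E F i j)) : f = g :=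
  AlgHom.ext_of_adjoin_eq_top (adjoin_range_ZMat E F) <| by
    rintro _ ⟨p, rfl⟩
    exact h p.1 p.2

end UniversalProperty

section Cogroupoid

variable {k} {m n p q : ℕ} (E : Matrix (Fin m) (Fin m) k) (F : Matrix (Fin n) (Fin n) k)
  {G : Matrix (Fin p) (Fin p) k} {G' : Matrix (Fin q) (Fin q) k}

/-- The comultiplication `B(E, F) → B(E, G) ⊗ B(G, F)`. For `E = F = G` it is the
comultiplication of `B(E)`. -/
def comul (hG : IsUnit G.det) : BB k E F →ₐ[k] BB k E G ⊗[k] BB k G F :=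
  lift <| IsPoint.mul hG
    ((isPoint_ZMat E G).map Algebra.TensorProduct.includeLeft)
    ((isPoint_ZMat G F).map Algebra.TensorProduct.includeRight)
    fun _ _ _ _ => (Commute.one_right _).tmul (Commute.one_left _)

theorem comul_ZMat (hG : IsUnit G.det) (i : Fin m) (j : Fin n) :
    comul E F hG (ZMat k E F i j) = ∑ l, ZMat k E G i l ⊗ₜ[k] ZMat k G F l j := by
  rw [comul, lift_ZMat]
  simp [mul_apply]

theorem comul_coassoc (hG : IsUnit G.det) (hG' : IsUnit G'.det) :
    (Algebra.TensorProduct.assoc k k k (BB k E G) (BB k G G') (BB k G' F)).toAlgHom.comp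
        ((Algebra.TensorProduct.map (comul E G' hG) (.id k _)).comp (comul E F hG')) =
      (Algebra.TensorProduct.map (.id k _) (comul G F hG')).comp (comul E F hG) := by
  refine algHom_ext fun i j => ?_
  simp only [AlgHom.comp_apply, comul_ZMat, map_sum, Algebra.TensorProduct.map_tmul,
    AlgHom.id_apply, TensorProduct.sum_tmul, TensorProduct.tmul_sum]
  exact Finset.sum_comm

variable {E} in
/-- The counit of `B(E)`. -/
def counit (hE : IsUnit E.det) : BB k E E →ₐ[k] k :=
  lift (IsPoint.one hE)

variable {E} in
theorem counit_ZMat (hE : IsUnit E.det) (i j : Fin m) :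
    counit hE (ZMat k E E i j) = if i = j then 1 else 0 := by
  rw [counit, lift_ZMat, one_apply]

variable {E} in
theorem map_counit_id_comp_comul (hE : IsUnit E.det) :
    (Algebra.TensorProduct.map (counit hE) (.id k _)).comp (comul E F hE) =
      (Algebra.TensorProduct.lid k (BB k E F)).symm := by
  refine algHom_ext fun i j => ?_
  simp [comul_ZMat, counit_ZMat, TensorProduct.ite_tmul]

variable {F} in
theorem map_id_counit_comp_comul (hF : IsUnit F.det) :
    (Algebra.TensorProduct.map (.id k _) (counit hF)).comp (comul E F hF) =
      (Algebra.TensorProduct.rid k k (BB k E F)).symm := by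
  refine algHom_ext fun i j => ?_
  simp [comul_ZMat, counit_ZMat, TensorProduct.tmul_ite]

variable {E F} (hE : IsUnit E.det) (hF : IsUnit F.det)

/-- The antipode `B(E, F) → B(F, E)`. For `E = F` it is the antipode of `B(E)`. -/
def antipode : BB k E F →ₗ[k] BB k F E :=
  (MulOpposite.opLinearEquiv k).symm.toLinearMap ∘ₗ
    (lift ((isPoint_ZMat F E).formAdjoint_op hF hE)).toLinearMap

theorem antipode_ZMat (i : Fin m) (j : Fin n) :
    antipode hE hF (ZMat k E F i j) = formAdjoint F E (ZMat k F E) i j := by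
  simp [antipode, lift_ZMat]

theorem antipode_one : antipode hE hF 1 = 1 := by
  simp [antipode]

theorem antipode_mul (x y : BB k E F) :
    antipode hE hF (x * y) = antipode hE hF y * antipode hE hF x := by
  simp [antipode]

theorem mul'_antipode_rTensor_comul (x : BB k E E) :
    LinearMap.mul' k (BB k F E) ((antipode hE hF).rTensor (BB k F E) (comul E E hF x)) =
      algebraMap k (BB k F E) (counit hE x) := by
  refine mul'_rTensor_eq_algebraMap_of_adjoin_eq_top _ _ (adjoin_range_ZMat E E) _
    (antipode_one hE hF) (antipode_mul hE hF) ?_ x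
  rintro _ ⟨⟨i, j⟩, rfl⟩
  simp only [comul_ZMat, counit_ZMat, map_sum, LinearMap.rTensor_tmul, LinearMap.mul'_apply,
    antipode_ZMat]
  rw [← mul_apply, (isPoint_ZMat F E).formAdjoint_mul_self, one_apply, apply_ite (algebraMap k _),
    map_one, map_zero]

theorem mul'_antipode_lTensor_comul (x : BB k E E) :
    LinearMap.mul' k (BB k E F) ((antipode hF hE).lTensor (BB k E F) (comul E E hF x)) =
      algebraMap k (BB k E F) (counit hE x) := by
  refine mul'_lTensor_eq_algebraMap_of_adjoin_eq_top _ _ (adjoin_range_ZMat E E) _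
    (antipode_one hF hE) (antipode_mul hF hE) ?_ x
  rintro _ ⟨⟨i, j⟩, rfl⟩
  simp only [comul_ZMat, counit_ZMat, map_sum, LinearMap.lTensor_tmul, LinearMap.mul'_apply,
    antipode_ZMat]
  rw [← mul_apply, (isPoint_ZMat E F).self_mul_formAdjoint, one_apply, apply_ite (algebraMap k _),
    map_one, map_zero]

/-- The Hopf algebra `B(E)`. -/
abbrev hopfAlgebra : HopfAlgebra k (BB k E E) where
  toBialgebra := Bialgebra.ofAlgHom (comul E E hE) (counit hE) (comul_coassoc E E hE hE)
    (map_counit_id_comp_comul E hE) (map_id_counit_comp_comul E hE)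
  antipode := antipode hE hE
  mul_antipode_rTensor_comul := LinearMap.ext (mul'_antipode_rTensor_comul hE hE)
  mul_antipode_lTensor_comul := LinearMap.ext (mul'_antipode_lTensor_comul hE hE)

end Cogroupoid

end BB

/-- For any invertible matrix `E ∈ GL(n,k)`, the algebra `B(E)`
admits a Hopf algebra structure with `Δ(a i j) = ∑ l, a i l ⊗ a l j`,
`ε(a i j) = δ i j` and `S(a i j) = (E⁻¹ * ᵀa * E) i j`. -/
theorem BB_hopfAlgebra_structure {n : ℕ} (E : Matrix (Fin n) (Fin n) k)
    (hE : IsUnit E.det) :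
    ∃ (Δ : BB k E E →ₐ[k] (BB k E E ⊗[k] BB k E E))
      (ε : BB k E E →ₐ[k] k) (S : BB k E E →ₗ[k] BB k E E),
      -- values on the generators
      (∀ i j, Δ (ZMat k E E i j) = ∑ l, ZMat k E E i l ⊗ₜ[k] ZMat k E E l j) ∧
      (∀ i j, ε (ZMat k E E i j) = if i = j then 1 else 0) ∧
      (∀ i j, S (ZMat k E E i j) =
        (liftMat k E⁻¹ * (ZMat k E E)ᵀ * liftMat k E :
          Matrix (Fin n) (Fin n) (BB k E E)) i j) ∧
      -- coassociativity
      (∀ x, (TensorProduct.assoc k (BB k E E) (BB k E E) (BB k E E))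
            ((Algebra.TensorProduct.map Δ (AlgHom.id k (BB k E E))) (Δ x)) =
          (Algebra.TensorProduct.map (AlgHom.id k (BB k E E)) Δ) (Δ x)) ∧
      -- counit axioms
      (∀ x, (TensorProduct.lid k (BB k E E))
            ((Algebra.TensorProduct.map ε (AlgHom.id k (BB k E E))) (Δ x)) = x) ∧
      (∀ x, (TensorProduct.rid k (BB k E E))
            ((Algebra.TensorProduct.map (AlgHom.id k (BB k E E)) ε) (Δ x)) = x) ∧
      -- antipode axioms
      (∀ x, (LinearMap.mul' k (BB k E E)) ((LinearMap.rTensor (BB k E E) S) (Δ x)) =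
          algebraMap k (BB k E E) (ε x)) ∧
      (∀ x, (LinearMap.mul' k (BB k E E)) ((LinearMap.lTensor (BB k E E) S) (Δ x)) =
          algebraMap k (BB k E E) (ε x)) := by
  let := BB.hopfAlgebra hE
  refine ⟨Bialgebra.comulAlgHom k _, Bialgebra.counitAlgHom k _, HopfAlgebra.antipode k,
    BB.comul_ZMat E E hE, BB.counit_ZMat hE, BB.antipode_ZMat hE hE,
    Coalgebra.coassoc_apply, fun x => ?_, fun x => ?_,
    HopfAlgebra.mul_antipode_rTensor_comul_apply, HopfAlgebra.mul_antipode_lTensor_comul_apply⟩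
  · exact (congrArg _ (Coalgebra.rTensor_counit_comul x)).trans (by simp)
  · exact (congrArg _ (Coalgebra.lTensor_counit_comul x)).trans (by simp)
end
end

section
/- Let k be an algebraically closed field, let n ≥ 2, and let M ∈ GL(n,k). Then there exists P ∈ GL(n,k) such that (ᵀP·M·P)_{nn} = 0, i.e. the (n,n) entry of ᵀP·M·P vanishes. -/
open Matrix

/-!
The `(l, l)` entry of `Pᵀ * M * P` is the value of the quadratic form `v ↦ v ⬝ᵥ M *ᵥ v` at the
`l`-th column of `P`. Every nonzero vector is the `l`-th column of some invertible matrix, so it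
suffices to find a nonzero isotropic vector. Given linearly independent `x` and `y` with
`Q x ≠ 0`, the value `Q (t • x + y)` is a polynomial of degree two in `t`; a root yields one.
-/

section IsotropicVector

variable {k : Type*} [Field k] [IsAlgClosed k]

theorem exists_quadratic_eq_zero_of_isAlgClosed {a : k} (ha : a ≠ 0) (b c : k) :
    ∃ t : k, a * t ^ 2 + b * t + c = 0 := by
  open Polynomial in
  obtain ⟨t, ht⟩ := IsAlgClosed.exists_root (C a * X ^ 2 + C b * X + C c)
    (by simp [degree_quadratic ha])
  exact ⟨t, by simpa using ht⟩

theorem exists_ne_zero_quadraticForm_eq_zero {V : Type*} [AddCommGroup V] [Module k V]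
    (hV : 1 < Module.rank k V) (Q : QuadraticForm k V) : ∃ v ≠ 0, Q v = 0 := by
  have : Nontrivial V := rank_pos_iff_nontrivial.mp (zero_lt_one.trans hV)
  obtain ⟨x, hx⟩ := exists_ne (0 : V)
  by_cases hQx : Q x = 0
  · exact ⟨x, hx, hQx⟩
  obtain ⟨y, hxy⟩ := exists_linearIndependent_pair_of_one_lt_rank hV hx
  obtain ⟨t, ht⟩ := exists_quadratic_eq_zero_of_isAlgClosed hQx (QuadraticMap.polar Q x y) (Q y)
  refine ⟨t • x + y, fun hv ↦ ?_, ?_⟩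
  · have hy : -t • x = y := by rw [neg_smul, neg_eq_of_add_eq_zero_right hv]
    exact (LinearIndependent.pair_iff' hx).mp hxy (-t) hy
  · calc Q (t • x + y) = Q x * t ^ 2 + QuadraticMap.polar Q x y * t + Q y := by
          rw [QuadraticMap.map_add Q, QuadraticMap.map_smul, QuadraticMap.polar_smul_left,
            smul_eq_mul, smul_eq_mul]
          ring
      _ = 0 := ht

end IsotropicVector

theorem exists_linearEquiv_apply_eq {K V : Type*} [DivisionRing K] [AddCommGroup V] [Module K V]
    {v w : V} (hv : v ≠ 0) (hw : w ≠ 0) : ∃ g : V ≃ₗ[K] V, g v = w := by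
  let spanEquiv (u : V) (hu : u ≠ 0) := LinearEquiv.toSpanNonzeroSingleton K V u hu
  obtain ⟨g, hg⟩ := Submodule.exists_linearEquiv_restrict_eq
    ((spanEquiv v hv).symm ≪≫ₗ spanEquiv w hw)
  refine ⟨g, ?_⟩
  calc g v = g (spanEquiv v hv 1) := by simp [spanEquiv]
    _ = spanEquiv w hw 1 := by
        rw [← hg, LinearEquiv.trans_apply, LinearEquiv.symm_apply_apply]
    _ = w := by simp [spanEquiv]

theorem exists_isUnit_det_col_eq {K ι : Type*} [Field K] [Fintype ι] [DecidableEq ι]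
    {v : ι → K} (hv : v ≠ 0) (l : ι) : ∃ P : Matrix ι ι K, IsUnit P.det ∧ P.col l = v := by
  obtain ⟨g, hg⟩ := exists_linearEquiv_apply_eq (K := K)
    (Pi.single_ne_zero_iff.mpr one_ne_zero : Pi.single l (1 : K) ≠ 0) hv
  refine ⟨LinearMap.toMatrix' g, ?_, ?_⟩
  · rw [LinearMap.det_toMatrix']
    exact g.isUnit_det'
  · rw [← mulVec_single_one, LinearMap.toMatrix'_mulVec]
    exact hg

theorem exists_congruent_last_entry_zero_general {k : Type*} [Field k] [IsAlgClosed k]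
    {ι : Type*} [Fintype ι] [DecidableEq ι] [Nontrivial ι] (M : Matrix ι ι k) (l : ι) :
    ∃ P : Matrix ι ι k, IsUnit P.det ∧ (Pᵀ * M * P) l l = 0 := by
  have hrank : 1 < Module.rank k (ι → k) := by
    rw [rank_fun']
    exact_mod_cast Fintype.one_lt_card
  obtain ⟨v, hv, hMv⟩ := exists_ne_zero_quadraticForm_eq_zero hrank M.toQuadraticForm'
  obtain ⟨P, hP, hPv⟩ := exists_isUnit_det_col_eq hv l
  refine ⟨P, hP, ?_⟩
  calc (Pᵀ * M * P) l l = P.col l ⬝ᵥ M *ᵥ P.col l := mul_mul_apply ..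
    _ = M.toQuadraticForm' v := by
        rw [hPv]
        exact (toLinearMap₂'_apply' M v v).symm
    _ = 0 := hMv

/-- **Statement 10.** Over an algebraically closed field, any invertible `n × n`
matrix (`n ≥ 2`) is congruent to a matrix whose last diagonal entry vanishes. -/
theorem exists_congruent_last_entry_zero (k : Type) [Field k] [IsAlgClosed k]
    {n : ℕ} (hn : 2 ≤ n) (M : Matrix (Fin n) (Fin n) k) (hM : IsUnit M.det) :
    ∃ P : Matrix (Fin n) (Fin n) k, IsUnit P.det ∧
      (Pᵀ * M * P) ⟨n - 1, by omega⟩ ⟨n - 1, by omega⟩ = 0 := by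
  have : Nontrivial (Fin n) := Fin.nontrivial_iff_two_le.mpr hn
  exact exists_congruent_last_entry_zero_general M _
end
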